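/- McCormick's concave envelope theorem for a bilinear term: let ℓ₁ ≤ u₁ and ℓ₂ ≤ u₂ be real numbers and let R = [ℓ₁,u₁] × [ℓ₂,u₂] ⊆ ℝ². Define g(x₁,x₂) = min(u₂x₁ + ℓ₁x₂ − ℓ₁u₂, ℓ₂x₁ + u₁x₂ − u₁ℓ₂). Then g is concave on R, g(x₁,x₂) ≥ x₁·x₂ for all (x₁,x₂) ∈ R, and for every function h : ℝ² → ℝ that is concave on R and satisfies h(x₁,x₂) ≥ x₁·x₂ for all (x₁,x₂) ∈ R, one has h(x₁,x₂) ≥ g(x₁,x₂) for all (x₁,x₂) ∈ R; that is, g is the concave envelope of the bilinear function (x₁,x₂) ↦ x₁·x₂ on R. -/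

import Mathlib

theorem concave_three {S : Set (ℝ × ℝ)} {h : ℝ × ℝ → ℝ} (hc : ConcaveOn ℝ S h)
    {p q r : ℝ × ℝ} (hp : p ∈ S) (hq : q ∈ S) (hr : r ∈ S) {a b c : ℝ}
    (ha : 0 ≤ a) (hb : 0 ≤ b) (hcc : 0 ≤ c) (habc : a + b + c = 1) :
    a * h p + b * h q + c * h r ≤ h (a • p + b • q + c • r) := by
  have := hc.le_map_sum (t := Finset.univ) (w := ![a, b, c]) (p := ![p, q, r])
    (by intro i _; fin_cases i <;> simpa) (by simpa [Fin.sum_univ_three] using habc)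
    (by intro i _; fin_cases i <;> simpa)
  simpa [Fin.sum_univ_three] using this

theorem exists_param {l u x : ℝ} (h : x ∈ Set.Icc l u) :
    ∃ s : ℝ, 0 ≤ s ∧ s ≤ 1 ∧ x = (1 - s) * l + s * u := by
  obtain ⟨h1, h2⟩ := h
  rcases eq_or_lt_of_le (h1.trans h2) with e | e
  · exact ⟨0, le_rfl, zero_le_one, by linarith⟩
  · have hd : 0 < u - l := sub_pos.2 e
    refine ⟨(x - l) / (u - l), div_nonneg (by linarith) hd.le, ?_, ?_⟩
    · rw [div_le_one hd]; linarith
    · field_simp; ring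

/-- McCormick's concave envelope theorem for a bilinear term: the pointwise minimum of the
two over-estimators is the concave envelope of `(x₁, x₂) ↦ x₁ * x₂` on the box
`[l₁, u₁] × [l₂, u₂]`. -/
theorem mccormick_concave_envelope (l₁ u₁ l₂ u₂ : ℝ) (h₁ : l₁ ≤ u₁) (h₂ : l₂ ≤ u₂) :
    ConcaveOn ℝ (Set.Icc l₁ u₁ ×ˢ Set.Icc l₂ u₂)
      (fun p : ℝ × ℝ =>
        min (u₂ * p.1 + l₁ * p.2 - l₁ * u₂) (l₂ * p.1 + u₁ * p.2 - u₁ * l₂)) ∧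
    (∀ p ∈ Set.Icc l₁ u₁ ×ˢ Set.Icc l₂ u₂,
      p.1 * p.2 ≤ min (u₂ * p.1 + l₁ * p.2 - l₁ * u₂) (l₂ * p.1 + u₁ * p.2 - u₁ * l₂)) ∧
    (∀ h : ℝ × ℝ → ℝ, ConcaveOn ℝ (Set.Icc l₁ u₁ ×ˢ Set.Icc l₂ u₂) h →
      (∀ p ∈ Set.Icc l₁ u₁ ×ˢ Set.Icc l₂ u₂, p.1 * p.2 ≤ h p) →
      ∀ p ∈ Set.Icc l₁ u₁ ×ˢ Set.Icc l₂ u₂,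
        min (u₂ * p.1 + l₁ * p.2 - l₁ * u₂) (l₂ * p.1 + u₁ * p.2 - u₁ * l₂) ≤ h p) := by
  have aff : ∀ a b c : ℝ, ConcaveOn ℝ (Set.Icc l₁ u₁ ×ˢ Set.Icc l₂ u₂)
      (fun p : ℝ × ℝ => a * p.1 + b * p.2 - c) := by
    intro a b c
    refine ⟨(convex_Icc _ _).prod (convex_Icc _ _), ?_⟩
    intro x _ y _ s t _ _ hst
    obtain rfl : t = 1 - s := by linarith
    simp only [smul_eq_mul, Prod.fst_add, Prod.snd_add, Prod.smul_fst, Prod.smul_snd]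
    apply le_of_eq
    ring
  refine ⟨(aff _ _ _).inf (aff _ _ _), ?_, ?_⟩
  · rintro ⟨x, y⟩ ⟨⟨hx1, hx2⟩, hy1, hy2⟩
    simp only at *
    apply le_min
    · nlinarith [mul_nonneg (sub_nonneg.2 hx1) (sub_nonneg.2 hy2)]
    · nlinarith [mul_nonneg (sub_nonneg.2 hx2) (sub_nonneg.2 hy1)]
  · rintro h hc hm ⟨x, y⟩ ⟨hx, hy⟩
    obtain ⟨s, hs0, hs1, rfl⟩ := exists_param hx
    obtain ⟨t, ht0, ht1, rfl⟩ := exists_param hy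
    have L1 := Set.left_mem_Icc.2 h₁
    have U1 := Set.right_mem_Icc.2 h₁
    have L2 := Set.left_mem_Icc.2 h₂
    have U2 := Set.right_mem_Icc.2 h₂
    have mll : (l₁, l₂) ∈ Set.Icc l₁ u₁ ×ˢ Set.Icc l₂ u₂ := ⟨L1, L2⟩
    have mlu : (l₁, u₂) ∈ Set.Icc l₁ u₁ ×ˢ Set.Icc l₂ u₂ := ⟨L1, U2⟩
    have mul' : (u₁, l₂) ∈ Set.Icc l₁ u₁ ×ˢ Set.Icc l₂ u₂ := ⟨U1, L2⟩
    have muu : (u₁, u₂) ∈ Set.Icc l₁ u₁ ×ˢ Set.Icc l₂ u₂ := ⟨U1, U2⟩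
    rcases le_total s t with hst | hst
    · refine (min_le_left _ _).trans ?_
      have key := concave_three hc mll mlu muu (sub_nonneg.2 ht1) (sub_nonneg.2 hst) hs0 (by ring)
      have e : (1 - t) • (l₁, l₂) + (t - s) • (l₁, u₂) + s • (u₁, u₂)
          = ((1 - s) * l₁ + s * u₁, (1 - t) * l₂ + t * u₂) := by
        ext <;> simp <;> ring
      rw [e] at key
      have k1 := mul_le_mul_of_nonneg_left (hm _ mll) (sub_nonneg.2 ht1)
      have k2 := mul_le_mul_of_nonneg_left (hm _ mlu) (sub_nonneg.2 hst)
      have k3 := mul_le_mul_of_nonneg_left (hm _ muu) hs0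
      simp only at *
      linarith
    · refine (min_le_right _ _).trans ?_
      have key := concave_three hc mll mul' muu (sub_nonneg.2 hs1) (sub_nonneg.2 hst) ht0 (by ring)
      have e : (1 - s) • (l₁, l₂) + (s - t) • (u₁, l₂) + t • (u₁, u₂)
          = ((1 - s) * l₁ + s * u₁, (1 - t) * l₂ + t * u₂) := by
        ext <;> simp <;> ring
      rw [e] at key
      have k1 := mul_le_mul_of_nonneg_left (hm _ mll) (sub_nonneg.2 hs1)
      have k2 := mul_le_mul_of_nonneg_left (hm _ mul') (sub_nonneg.2 hst)
      have k3 := mul_le_mul_of_nonneg_left (hm _ muu) ht0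
      simp only at *
      linarith
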